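/- Let ψ : ℝ_{>0} → ℝ_{>0} be a function with τ(ψ) = b_1 − b_n. If the function t ↦ ψ(t)·e^{(b_1 − b_n)t} is bounded on ℝ_{>0}, then S_Ad(ψ)^c = ∅, i.e., every g ∈ SL_n(ℝ) is ψ-Diophantine for the adjoint representation. -/

import Mathlib

open MeasureTheory Filter

attribute [local instance] Matrix.frobeniusNormedAddCommGroup

noncomputable section

/-- The Frobenius norm of a real matrix. -/
def frobNorm {n : ℕ} (X : Matrix (Fin n) (Fin n) ℝ) : ℝ :=
  Real.sqrt (∑ i, ∑ j, (X i j) ^ 2)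

/-- The first minimum of a set of matrices: the infimum of the Frobenius norms of its
nonzero elements. -/
def firstMinM {n : ℕ} (Λ : Set (Matrix (Fin n) (Fin n) ℝ)) : ℝ :=
  sInf {r | ∃ X ∈ Λ, X ≠ 0 ∧ frobNorm X = r}

/-- The diagonal matrix `a_t = diag(e^{b₁ t}, …, e^{bₙ t})`. -/
def aMat {n : ℕ} (b : Fin n → ℝ) (t : ℝ) : Matrix (Fin n) (Fin n) ℝ :=
  Matrix.diagonal fun i => Real.exp (b i * t)

/-- `SL_n(ℝ)` as the set of real `n × n` matrices of determinant one. -/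
def SLset (n : ℕ) : Set (Matrix (Fin n) (Fin n) ℝ) := {g | g.det = 1}

/-- The lattice `sl_n(ℤ)` of trace-zero integer matrices, inside `sl_n(ℝ)`. -/
def slZ (n : ℕ) : Set (Matrix (Fin n) (Fin n) ℝ) :=
  {X | (∃ m : Matrix (Fin n) (Fin n) ℤ, X = m.map (fun a => (a : ℝ))) ∧ Matrix.trace X = 0}

/-- The set of `ψ`-Diophantine elements of `SL_n(ℝ)` for the adjoint representation:
`Ad(g)X = g X g⁻¹`. -/
def SAdDio {n : ℕ} (b : Fin n → ℝ) (ψ : ℝ → ℝ) : Set (Matrix (Fin n) (Fin n) ℝ) :=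
  {g | g ∈ SLset n ∧ ∃ C > 0, ∀ t > 0,
    C * ψ t ≤ firstMinM
      ((fun X => (aMat b t * g) * X * (aMat b t * g)⁻¹) '' slZ n)}

/-- `τ(ψ) = liminf_{t → ∞} (-ln ψ(t))/t`, as an extended real number. -/
def tauE (ψ : ℝ → ℝ) : EReal :=
  liminf (fun t : ℝ => ((-Real.log (ψ t) / t : ℝ) : EReal)) atTop

theorem frobNorm_eq_norm {n : ℕ} (X : Matrix (Fin n) (Fin n) ℝ) : frobNorm X = ‖X‖ := by
  rw [frobNorm, Matrix.frobenius_norm_def, Real.sqrt_eq_rpow]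
  simp

theorem abs_apply_le_frobNorm {n : ℕ} (X : Matrix (Fin n) (Fin n) ℝ) (i j : Fin n) :
    |X i j| ≤ frobNorm X := by
  refine Real.abs_le_sqrt ?_
  calc X i j ^ 2 ≤ ∑ l, X i l ^ 2 :=
        Finset.single_le_sum (f := fun l => X i l ^ 2) (fun _ _ => sq_nonneg _)
          (Finset.mem_univ j)
    _ ≤ ∑ k, ∑ l, X k l ^ 2 :=
        Finset.single_le_sum (f := fun k => ∑ l, X k l ^ 2)
          (fun _ _ => Finset.sum_nonneg fun _ _ => sq_nonneg _) (Finset.mem_univ i)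

theorem frobNorm_le_mul_of_abs_le {n : ℕ} {X Y : Matrix (Fin n) (Fin n) ℝ} {c : ℝ}
    (hc : 0 ≤ c) (h : ∀ i j, |X i j| ≤ c * |Y i j|) : frobNorm X ≤ c * frobNorm Y := by
  rw [frobNorm, frobNorm, ← Real.sqrt_sq hc, ← Real.sqrt_mul (sq_nonneg c),
    Finset.mul_sum]
  refine Real.sqrt_le_sqrt (Finset.sum_le_sum fun i _ => ?_)
  rw [Finset.mul_sum]
  refine Finset.sum_le_sum fun j _ => ?_
  calc X i j ^ 2 = |X i j| ^ 2 := (sq_abs _).symm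
    _ ≤ (c * |Y i j|) ^ 2 := pow_le_pow_left₀ (abs_nonneg _) (h i j) 2
    _ = c ^ 2 * Y i j ^ 2 := by rw [mul_pow, sq_abs]

theorem frobNorm_mul_mul_le {n : ℕ} (A X B : Matrix (Fin n) (Fin n) ℝ) :
    frobNorm (A * X * B) ≤ frobNorm A * frobNorm X * frobNorm B := by
  simp only [frobNorm_eq_norm]
  exact (Matrix.frobenius_norm_mul _ _).trans
    (mul_le_mul_of_nonneg_right (Matrix.frobenius_norm_mul _ _) (norm_nonneg _))

theorem aMat_mul_aMat_neg {n : ℕ} (b : Fin n → ℝ) (t : ℝ) : aMat b t * aMat b (-t) = 1 := by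
  rw [aMat, aMat, Matrix.diagonal_mul_diagonal, ← Matrix.diagonal_one]
  congr 1
  funext i
  rw [← Real.exp_add]
  simp

/-- Conjugation by `a_t⁻¹` expands the Frobenius norm by at most `e^{w t}`, where `w` bounds the
differences of the exponents. -/
theorem frobNorm_aMat_neg_conj_le {n : ℕ} {b : Fin n → ℝ} {w t : ℝ} (ht : 0 ≤ t)
    (hw : ∀ i j, b j - b i ≤ w) (Y : Matrix (Fin n) (Fin n) ℝ) :
    frobNorm (aMat b (-t) * Y * aMat b t) ≤ Real.exp (w * t) * frobNorm Y := by
  refine frobNorm_le_mul_of_abs_le (Real.exp_pos _).le fun i j => ?_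
  have h : (aMat b (-t) * Y * aMat b t) i j = Real.exp ((b j - b i) * t) * Y i j := by
    rw [aMat, aMat, Matrix.mul_diagonal, Matrix.diagonal_mul, mul_right_comm, ← Real.exp_add]
    ring_nf
  rw [h, abs_mul, Real.abs_exp]
  exact mul_le_mul_of_nonneg_right
    (Real.exp_le_exp.2 (mul_le_mul_of_nonneg_right (hw i j) ht)) (abs_nonneg _)

theorem one_le_frobNorm_of_mem_slZ {n : ℕ} {X : Matrix (Fin n) (Fin n) ℝ} (hX : X ∈ slZ n)
    (h0 : X ≠ 0) : 1 ≤ frobNorm X := by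
  obtain ⟨⟨m, rfl⟩, -⟩ := hX
  obtain ⟨i, j, hij⟩ : ∃ i j, m i j ≠ 0 := by
    by_contra! h
    exact h0 (by ext i j; simp [h i j])
  refine le_trans ?_ (abs_apply_le_frobNorm _ i j)
  rw [Matrix.map_apply]
  exact_mod_cast Int.one_le_abs hij

theorem exists_ne_zero_mem_slZ {n : ℕ} (hn : 2 ≤ n) : ∃ X ∈ slZ n, X ≠ 0 := by
  have h01 : (⟨0, by omega⟩ : Fin n) ≠ ⟨1, by omega⟩ := by simp
  refine ⟨(Matrix.single ⟨0, by omega⟩ ⟨1, by omega⟩ (1 : ℤ)).map (fun a => (a : ℝ)),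
    ⟨⟨_, rfl⟩, ?_⟩, fun h => ?_⟩
  · refine Finset.sum_eq_zero fun i _ => ?_
    simp only [Matrix.diag_apply, Matrix.map_apply, Matrix.single_apply]
    rw [if_neg fun h => h01 (h.1.trans h.2.symm), Int.cast_zero]
  · simpa using congrFun (congrFun h ⟨0, by omega⟩) ⟨1, by omega⟩

/-- Every `g ∈ SL_n(ℝ)` satisfies `δ(Ad(a_t g) sl_n(ℤ)) ≥ C e^{-w t}` for `t ≥ 0`. -/
theorem exists_mul_exp_le_firstMinM {n : ℕ} (hn : 2 ≤ n) {b : Fin n → ℝ} {w : ℝ}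
    (hw : ∀ i j, b j - b i ≤ w) {g : Matrix (Fin n) (Fin n) ℝ} (hg : g.det = 1) :
    ∃ C > 0, ∀ t, 0 ≤ t → C * Real.exp (-(w * t)) ≤ firstMinM
      ((fun X => (aMat b t * g) * X * (aMat b t * g)⁻¹) '' slZ n) := by
  have hgu : IsUnit g.det := by simp [hg]
  have hK : 0 < frobNorm g⁻¹ * frobNorm g + 1 := by
    rw [frobNorm_eq_norm, frobNorm_eq_norm]
    positivity
  refine ⟨(frobNorm g⁻¹ * frobNorm g + 1)⁻¹, inv_pos.2 hK, fun t ht => ?_⟩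
  have haa := aMat_mul_aMat_neg b t
  have haa' : aMat b (-t) * aMat b t = 1 := by simpa using aMat_mul_aMat_neg b (-t)
  have hinv : (aMat b t * g)⁻¹ = g⁻¹ * aMat b (-t) := by
    rw [Matrix.mul_inv_rev, Matrix.inv_eq_right_inv haa]
  have hrec : ∀ X, g⁻¹ * (aMat b (-t) * ((aMat b t * g) * X * (aMat b t * g)⁻¹) * aMat b t) * g
      = X := by
    intro X
    calc _ = g⁻¹ * (aMat b (-t) * aMat b t) * g * X * g⁻¹ * (aMat b (-t) * aMat b t) * g := by
          rw [hinv]; simp only [Matrix.mul_assoc]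
      _ = (g⁻¹ * g) * X * (g⁻¹ * g) := by
          rw [haa']; simp only [Matrix.mul_assoc, Matrix.mul_one]
      _ = X := by rw [Matrix.nonsing_inv_mul g hgu, Matrix.one_mul, Matrix.mul_one]
  refine le_csInf ?_ ?_
  · obtain ⟨X, hX, h0⟩ := exists_ne_zero_mem_slZ hn
    refine ⟨_, _, ⟨X, hX, rfl⟩, fun h => h0 ?_, rfl⟩
    have := hrec X
    simp only at h
    rw [h] at this
    simpa using this.symm
  · rintro _ ⟨_, ⟨X, hX, rfl⟩, hne, rfl⟩
    have h0 : X ≠ 0 := fun h => hne (by simp [h])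
    simp only
    generalize hY : (aMat b t * g) * X * (aMat b t * g)⁻¹ = Y
    have hYX := hrec X
    rw [hY] at hYX
    have hYn : 0 ≤ frobNorm Y := Real.sqrt_nonneg _
    have hgi : 0 ≤ frobNorm g⁻¹ := Real.sqrt_nonneg _
    have hgn : 0 ≤ frobNorm g := Real.sqrt_nonneg _
    have key : 1 ≤ (frobNorm g⁻¹ * frobNorm g + 1) * (Real.exp (w * t) * frobNorm Y) :=
      calc 1 ≤ frobNorm X := one_le_frobNorm_of_mem_slZ hX h0
        _ ≤ frobNorm g⁻¹ * frobNorm (aMat b (-t) * Y * aMat b t) * frobNorm g := by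
            conv_lhs => rw [← hYX]
            exact frobNorm_mul_mul_le _ _ _
        _ ≤ frobNorm g⁻¹ * (Real.exp (w * t) * frobNorm Y) * frobNorm g := by
            gcongr
            exact frobNorm_aMat_neg_conj_le ht hw Y
        _ ≤ _ := by
            have : 0 ≤ Real.exp (w * t) * frobNorm Y := by positivity
            linarith
    rw [Real.exp_neg, ← mul_inv, inv_le_iff_one_le_mul₀' (mul_pos hK (Real.exp_pos _)), mul_assoc]
    exact key

theorem SAdDio_compl_empty_of_bounded
    (n : ℕ) (hn : 2 ≤ n) (b : Fin n → ℝ)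
    (hmono : ∀ i j : Fin n, i ≤ j → b j ≤ b i)
    (hsum : ∑ i, b i = 0) (hb : b ≠ 0)
    (ψ : ℝ → ℝ) (hψpos : ∀ t > 0, 0 < ψ t)
    (hτ : tauE ψ = ((b ⟨0, by omega⟩ - b ⟨n - 1, by omega⟩ : ℝ) : EReal))
    (hbdd : ∃ M : ℝ, ∀ t > 0,
      ψ t * Real.exp ((b ⟨0, by omega⟩ - b ⟨n - 1, by omega⟩) * t) ≤ M) :
    SLset n \ SAdDio b ψ = ∅ := by
  obtain ⟨M, hM⟩ := hbdd
  have hw : ∀ i j : Fin n, b j - b i ≤ b ⟨0, by omega⟩ - b ⟨n - 1, by omega⟩ := by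
    intro i j
    have hj := hmono ⟨0, by omega⟩ j (Fin.mk_le_of_le_val (Nat.zero_le _))
    have hi := hmono i ⟨n - 1, by omega⟩ (Fin.le_def.2 (Nat.le_sub_one_of_lt i.2))
    linarith
  have hMpos : 0 < M :=
    (mul_pos (hψpos 1 one_pos) (Real.exp_pos _)).trans_le (hM 1 one_pos)
  rw [Set.sdiff_eq_empty]
  intro g hg
  obtain ⟨C, hC, hmin⟩ := exists_mul_exp_le_firstMinM hn hw hg
  refine ⟨hg, C / M, div_pos hC hMpos, fun t ht => le_trans ?_ (hmin t (le_of_lt ht))⟩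
  rw [div_mul_eq_mul_div, mul_div_assoc]
  refine mul_le_mul_of_nonneg_left ?_ hC.le
  rw [div_le_iff₀ hMpos, Real.exp_neg, inv_mul_eq_div, le_div_iff₀ (Real.exp_pos _)]
  exact hM t ht

end
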